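/- arXiv:math/0407174 — 6 statements merged into one kernel-verified Lean document; each statement's English description precedes it below -/
import Mathlib

section
/- Let α be a totally real real number. Then the real number √(1 + α²) is totally real. -/
/-! Every conjugate `z` of `β = √(1 + α²)` is `φ β` for some embedding `φ : ℚ(α, β) → ℂ`. Then
`w = φ α` is a conjugate of `α`, hence real, and `z² = 1 + w²` is a positive real number, which
forces `z` to be real. -/

open Polynomial

/-- A complex number is *totally real* if it is algebraic over ℚ and every complex
root of its minimal polynomial over ℚ is a real number. -/
def IsTotallyReal (α : ℂ) : Prop :=
  IsAlgebraic ℚ α ∧ ∀ z : ℂ, aeval z (minpoly ℚ α) = 0 → z.im = 0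

/-- A complex square root of the positive real number `1 + w²`, with `w` real, is real. -/
lemma im_eq_zero_of_sq_eq_one_add_sq {z w : ℂ} (hw : w.im = 0) (h : z ^ 2 = 1 + w ^ 2) :
    z.im = 0 := by
  have hre := congrArg Complex.re h
  have him := congrArg Complex.im h
  simp only [pow_two, Complex.mul_re, Complex.mul_im, Complex.add_re, Complex.add_im,
    Complex.one_re, Complex.one_im, hw] at hre him
  have hprod : z.re * z.im = 0 := by linarith
  rcases mul_eq_zero.mp hprod with h0 | h0
  · rw [h0] at hre
    nlinarith [sq_nonneg z.im, sq_nonneg w.re]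
  · exact h0

theorem totallyReal_sqrt_one_add_sq (α : ℝ) (hα : IsTotallyReal (α : ℂ)) :
    IsTotallyReal ((Real.sqrt (1 + α ^ 2) : ℝ) : ℂ) := by
  obtain ⟨halg, hreal⟩ := hα
  have hsq : ((Real.sqrt (1 + α ^ 2) : ℝ) : ℂ) ^ 2 = 1 + (α : ℂ) ^ 2 := by
    rw [← Complex.ofReal_pow, Real.sq_sqrt (by positivity)]
    push_cast
    rfl
  generalize ((Real.sqrt (1 + α ^ 2) : ℝ) : ℂ) = β at hsq ⊢
  have hβ : IsAlgebraic ℚ β := by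
    refine IsAlgebraic.of_pow two_pos ?_
    rw [hsq]
    exact isAlgebraic_one.add (halg.pow 2)
  refine ⟨hβ, fun z hz => ?_⟩
  have hS : ∀ s ∈ ({(α : ℂ), β} : Set ℂ),
      IsIntegral ℚ s ∧ ((minpoly ℚ s).map (algebraMap ℚ ℂ)).Splits := by
    rintro s (rfl | rfl)
    · exact ⟨halg.isIntegral, IsAlgClosed.splits _⟩
    · exact ⟨hβ.isIntegral, IsAlgClosed.splits _⟩
  have hαmem : (α : ℂ) ∈ IntermediateField.adjoin ℚ ({(α : ℂ), β} : Set ℂ) :=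
    IntermediateField.subset_adjoin _ _ (by simp)
  have hβmem : β ∈ IntermediateField.adjoin ℚ ({(α : ℂ), β} : Set ℂ) :=
    IntermediateField.subset_adjoin _ _ (by simp)
  obtain ⟨φ, hφ⟩ := IntermediateField.exists_algHom_adjoin_of_splits_of_aeval hS hβmem hz
  have hw : (φ ⟨α, hαmem⟩).im = 0 := by
    apply hreal
    have hmin := IntermediateField.minpoly_eq
      (⟨(α : ℂ), hαmem⟩ : IntermediateField.adjoin ℚ ({(α : ℂ), β} : Set ℂ))
    rw [← hmin, aeval_algHom_apply]
    exact (congrArg φ (minpoly.aeval ℚ _)).trans (map_zero φ)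
  refine im_eq_zero_of_sq_eq_one_add_sq hw ?_
  rw [← hφ, ← map_pow, ← map_pow, ← map_one φ, ← map_add]
  exact congrArg φ (Subtype.ext hsq)
end

section
/- Let A be an n × n complex matrix whose characteristic polynomial is ∏_{i=1}^{n} (X − xᵢ) and let B be an m × m complex matrix whose characteristic polynomial is ∏_{j=1}^{m} (X − yⱼ). Then the characteristic polynomial of the Kronecker product A ⊗ B is ∏_{i=1}^{n} ∏_{j=1}^{m} (X − xᵢyⱼ). -/
/-!
The matrix `t - A ⊗ B` is an `n × n` array of blocks `t δᵢⱼ - Aᵢⱼ B`, all of them values at `B` of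
polynomials in one variable. The blocks therefore commute, and Silvester's formula `Matrix.det_det`
computes the determinant in two steps: `det (t - A ⊗ B) = det (q(B))`, where `q(X) = det (t - X A)`.
Rescaling the characteristic polynomial of `A` gives `q(X) = ∏ᵢ (t - xᵢ X)`
(`det_scalar_sub_smul`), so `det (q(B)) = ∏ᵢ det (t - xᵢ B)`, and the same rescaling applied to `B`
gives `∏ᵢ ∏ⱼ (t - xᵢ yⱼ)`.
-/

open Polynomial Matrix Kronecker

/-- The homogenized form of a factorization of the characteristic polynomial. -/
theorem det_scalar_sub_smul {n : ℕ} (A : Matrix (Fin n) (Fin n) ℂ) (x : Fin n → ℂ)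
    (hA : A.charpoly = ∏ i : Fin n, (X - C (x i))) (t s : ℂ) :
    (Matrix.scalar (Fin n) t - s • A).det = ∏ i : Fin n, (t - s * x i) := by
  rcases eq_or_ne s 0 with rfl | hs
  · simp
  · have h : Matrix.scalar (Fin n) t - s • A = s • (Matrix.scalar (Fin n) (t / s) - A) := by
      rw [smul_sub]
      congr 1
      ext i j
      simp only [Matrix.scalar_apply, Matrix.smul_apply, Matrix.diagonal_apply, smul_eq_mul]
      split_ifs
      · field_simp
      · simp
    rw [h, det_smul, ← eval_charpoly, hA, eval_prod, Fintype.card, ← Finset.prod_const,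
      ← Finset.prod_mul_distrib]
    refine Finset.prod_congr rfl fun i _ => ?_
    simp only [eval_sub, eval_X, eval_C]
    field_simp

/-- The polynomial `q(X) = det (t - X A)`, factored. -/
theorem det_scalar_sub_X_smul {n : ℕ} (A : Matrix (Fin n) (Fin n) ℂ) (x : Fin n → ℂ)
    (hA : A.charpoly = ∏ i : Fin n, (X - C (x i))) (t : ℂ) :
    (Matrix.scalar (Fin n) (C t) - (X : ℂ[X]) • A.map C).det
      = ∏ i : Fin n, (C t - C (x i) * X) := by
  refine Polynomial.funext fun s => ?_
  rw [← coe_evalRingHom, RingHom.map_det, map_prod]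
  have h : (evalRingHom s).mapMatrix (Matrix.scalar (Fin n) (C t) - (X : ℂ[X]) • A.map C)
      = Matrix.scalar (Fin n) t - s • A := by
    ext i j
    by_cases hij : i = j <;> simp [hij, mul_comm (A _ _)]
  rw [h, det_scalar_sub_smul A x hA]
  simp [mul_comm s]

theorem charpoly_kronecker_eq (n m : ℕ)
    (A : Matrix (Fin n) (Fin n) ℂ) (B : Matrix (Fin m) (Fin m) ℂ)
    (x : Fin n → ℂ) (y : Fin m → ℂ)
    (hA : A.charpoly = ∏ i : Fin n, (X - C (x i)))
    (hB : B.charpoly = ∏ j : Fin m, (X - C (y j))) :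
    (A ⊗ₖ B).charpoly = ∏ i : Fin n, ∏ j : Fin m, (X - C (x i * y j)) := by
  refine Polynomial.funext fun t => ?_
  have hdet := Matrix.det_det (Matrix.scalar (Fin n) (C t) - (X : ℂ[X]) • A.map C)
    (aeval B : ℂ[X] →ₐ[ℂ] Matrix (Fin m) (Fin m) ℂ).toRingHom
  have hblock : ((Matrix.scalar (Fin n) (C t) - (X : ℂ[X]) • A.map C).map
      (aeval B : ℂ[X] →ₐ[ℂ] Matrix (Fin m) (Fin m) ℂ).toRingHom).comp _ _ _ _ ℂ
      = Matrix.scalar (Fin n × Fin m) t - A ⊗ₖ B := by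
    ext ⟨i, k⟩ ⟨j, l⟩
    by_cases hij : i = j <;> by_cases hkl : k = l <;>
      simp [Matrix.comp_apply, hij, hkl, Matrix.algebraMap_eq_diagonal,
        mul_comm (A _ _)]
  rw [hblock, det_scalar_sub_X_smul A x hA] at hdet
  -- The matrix ring is not commutative, so only the composite `det ∘ aeval B` can be moved
  -- through the product.
  have hprod := map_prod (detMonoidHom.comp
    ((aeval B : ℂ[X] →ₐ[ℂ] Matrix (Fin m) (Fin m) ℂ).toRingHom :
      ℂ[X] →* Matrix (Fin m) (Fin m) ℂ))
    (fun i => C t - C (x i) * X) Finset.univ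
  simp only [MonoidHom.comp_apply, coe_detMonoidHom, MonoidHom.coe_coe] at hprod
  rw [eval_charpoly, ← hdet, hprod, eval_prod]
  refine Finset.prod_congr rfl fun i _ => ?_
  have h : (aeval B : ℂ[X] →ₐ[ℂ] Matrix (Fin m) (Fin m) ℂ).toRingHom (C t - C (x i) * X)
      = Matrix.scalar (Fin m) t - x i • B := by
    simp [Algebra.smul_def, Matrix.algebraMap_eq_diagonal, Pi.algebraMap_def]
  rw [h, det_scalar_sub_smul B y hB, eval_prod]
  simp
end

section
/- Let A be an n × n complex matrix whose characteristic polynomial is ∏_{i=1}^{n} (X − xᵢ) and let B be an m × m complex matrix whose characteristic polynomial is ∏_{j=1}^{m} (X − yⱼ). Then the characteristic polynomial of the matrix A ⊗ Iₘ + Iₙ ⊗ B is ∏_{i=1}^{n} ∏_{j=1}^{m} (X − xᵢ − yⱼ). -/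
/-!
The characteristic matrix of `A ⊗ Iₘ + Iₙ ⊗ B` is the block matrix
with blocks `δᵢⱼ (X Iₘ - B) - Aᵢⱼ Iₘ`, i.e. the image of the characteristic matrix of `A` under the
`ℂ`-algebra map `ℂ[X] → Mₘ(ℂ[X])` sending `X` to `X Iₘ - B`. By `Matrix.det_det`, the determinant
of a block matrix with blocks in the image of a commutative ring is the determinant of the block
determinant, here of `∏ᵢ (X Iₘ - B - xᵢ Iₘ)`. The `i`-th factor has determinant
`χ_B (X - xᵢ) = ∏ⱼ (X - xᵢ - yⱼ)`.
-/

open Polynomial Matrix Kronecker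

/-- Shifting the characteristic matrix by a scalar amounts to substituting `X - a` for `X`. -/
lemma det_charmatrix_sub_algebraMap {m : ℕ} (B : Matrix (Fin m) (Fin m) ℂ) (a : ℂ) :
    (B.charmatrix - algebraMap ℂ (Matrix (Fin m) (Fin m) ℂ[X]) a).det =
      B.charpoly.comp (X - C a) := by
  have h : B.charmatrix - algebraMap ℂ (Matrix (Fin m) (Fin m) ℂ[X]) a =
      (compRingHom (X - C a)).mapMatrix B.charmatrix := by
    ext1 i j
    by_cases hij : i = j
    · subst hij
      simp [Matrix.algebraMap_matrix_apply]
      ring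
    · simp [Matrix.algebraMap_matrix_apply, hij]
  rw [h, ← RingHom.map_det]
  rfl

theorem charpoly_kroneckerSum_eq (n m : ℕ)
    (A : Matrix (Fin n) (Fin n) ℂ) (B : Matrix (Fin m) (Fin m) ℂ)
    (x : Fin n → ℂ) (y : Fin m → ℂ)
    (hA : A.charpoly = ∏ i : Fin n, (X - C (x i)))
    (hB : B.charpoly = ∏ j : Fin m, (X - C (y j))) :
    (A ⊗ₖ (1 : Matrix (Fin m) (Fin m) ℂ) + (1 : Matrix (Fin n) (Fin n) ℂ) ⊗ₖ B).charpoly =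
      ∏ i : Fin n, ∏ j : Fin m, (X - C (x i) - C (y j)) := by
  let f : ℂ[X] →+* Matrix (Fin m) (Fin m) ℂ[X] := (aeval (R := ℂ) B.charmatrix).toRingHom
  have hfX : f X = B.charmatrix := aeval_X _
  have hfC (a : ℂ) : f (C a) = algebraMap ℂ (Matrix (Fin m) (Fin m) ℂ[X]) a := aeval_C _ _
  have hblock : (A ⊗ₖ (1 : Matrix (Fin m) (Fin m) ℂ) +
      (1 : Matrix (Fin n) (Fin n) ℂ) ⊗ₖ B).charmatrix =
      Matrix.comp _ _ _ _ _ (f.mapMatrix A.charmatrix) := by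
    ext1 ⟨i, k⟩ ⟨j, l⟩
    by_cases hij : i = j
    · subst hij
      by_cases hkl : k = l
      · subst hkl
        simp [Matrix.comp_apply, hfX, hfC, Matrix.algebraMap_matrix_apply]
        ring
      · simp [Matrix.comp_apply, hfX, hfC, Matrix.algebraMap_matrix_apply, hkl]
    · by_cases hkl : k = l <;>
        simp [Matrix.comp_apply, hfC, Matrix.algebraMap_matrix_apply, hij, hkl]
  have hdet : (A ⊗ₖ (1 : Matrix (Fin m) (Fin m) ℂ) +
      (1 : Matrix (Fin n) (Fin n) ℂ) ⊗ₖ B).charpoly = (f A.charpoly).det := by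
    rw [Matrix.charpoly, hblock, Matrix.charpoly, Matrix.det_det]
    rfl
  -- The ring of matrices is not commutative, so `map_prod` applies to `det ∘ f` but not to `f`.
  let g : ℂ[X] →* ℂ[X] := Matrix.detMonoidHom.comp f.toMonoidHom
  have hg (p : ℂ[X]) : g p = (f p).det := rfl
  rw [hdet, hA, ← hg, map_prod]
  refine Finset.prod_congr rfl fun i _ => ?_
  rw [hg, map_sub, hfX, hfC, det_charmatrix_sub_algebraMap, hB, Polynomial.prod_comp]
  simp
end

section
/- Every element of F_{√(1+x²)} is totally real, i.e. if α is a real number lying in every subfield K of ℝ with the property that √(1+x²) ∈ K for all x ∈ K, then α is algebraic over ℚ and every complex root of the minimal polynomial of α over ℚ is real. -/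
/-!
Let `A` be the field of real algebraic numbers. The elements of `A` that every embedding
`φ : A → ℂ` sends into `ℝ` form a subfield `K` of `ℝ`. It is closed under `x ↦ √(1+x²)`:
if `φ x` is real and `y = √(1+x²)`, then `(φ y)² = 1 + (φ x)²` is a nonnegative real number,
so `φ y` is real. Hence `α ∈ K`. As `A / ℚ` is algebraic and `ℂ` is algebraically closed, every
root of the minimal polynomial of `α` is `φ α` for some `φ`, hence real.
-/

open Polynomial

/-- Membership in `F_{√(1+x²)}`, the smallest subfield of ℝ closed under
`x ↦ √(1+x²)`. -/
def MemFSqrtOneAddSq (α : ℝ) : Prop :=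
  ∀ K : Subfield ℝ, (∀ x ∈ K, Real.sqrt (1 + x ^ 2) ∈ K) → α ∈ K

/-- Membership in `F_{√x}`, the smallest subfield of ℂ closed under taking
square roots. -/
def MemFSqrt (α : ℂ) : Prop :=
  ∀ L : Subfield ℂ, (∀ z : ℂ, z ^ 2 ∈ L → z ∈ L) → α ∈ L

/-- The totally real algebraic real numbers: the image in `ℝ` of those real algebraic numbers
that every `ℚ`-embedding of the field of real algebraic numbers into `ℂ` maps to a real number. -/
noncomputable def totallyRealSubfield : Subfield ℝ :=
  (⨅ φ : algebraicClosure ℚ ℝ →ₐ[ℚ] ℂ,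
    Complex.ofRealHom.fieldRange.comap (φ : algebraicClosure ℚ ℝ →+* ℂ)).map
      (algebraMap (algebraicClosure ℚ ℝ) ℝ)

lemma mem_totallyRealSubfield {x : ℝ} :
    x ∈ totallyRealSubfield ↔ ∃ a : algebraicClosure ℚ ℝ,
      (∀ φ : algebraicClosure ℚ ℝ →ₐ[ℚ] ℂ, ∃ r : ℝ, (r : ℂ) = φ a) ∧ (a : ℝ) = x := by
  simp only [totallyRealSubfield, Subfield.mem_map, Subfield.mem_iInf, Subfield.mem_comap,
    RingHom.mem_fieldRange]
  rfl

lemma sqrt_mem_totallyRealSubfield {x : ℝ} (hx : x ∈ totallyRealSubfield) :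
    Real.sqrt (1 + x ^ 2) ∈ totallyRealSubfield := by
  rw [mem_totallyRealSubfield] at hx ⊢
  obtain ⟨a, ha, rfl⟩ := hx
  have hsq : Real.sqrt (1 + (a : ℝ) ^ 2) ^ 2 = 1 + (a : ℝ) ^ 2 := Real.sq_sqrt (by positivity)
  have hmem : Real.sqrt (1 + (a : ℝ) ^ 2) ∈ algebraicClosure ℚ ℝ := by
    rw [mem_algebraicClosure_iff]
    refine IsAlgebraic.of_pow (n := 2) two_pos ?_
    rw [hsq]
    exact mem_algebraicClosure_iff.mp (1 + a ^ 2 : algebraicClosure ℚ ℝ).2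
  refine ⟨⟨_, hmem⟩, fun φ => ?_, rfl⟩
  obtain ⟨r, hr⟩ := ha φ
  have hy : (⟨_, hmem⟩ : algebraicClosure ℚ ℝ) ^ 2 = 1 + a ^ 2 := Subtype.ext hsq
  have h2 : φ ⟨_, hmem⟩ ^ 2 = ((Real.sqrt (1 + r ^ 2) : ℝ) : ℂ) ^ 2 := by
    rw [← map_pow, hy, ← Complex.ofReal_pow, Real.sq_sqrt (by positivity)]
    simp [hr]
  rcases sq_eq_sq_iff_eq_or_eq_neg.mp h2 with h | h
  · exact ⟨_, h.symm⟩
  · exact ⟨-Real.sqrt (1 + r ^ 2), by rw [h, Complex.ofReal_neg]⟩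

theorem memFSqrtOneAddSq_totallyReal (α : ℝ) (h : MemFSqrtOneAddSq α) :
    IsTotallyReal (α : ℂ) := by
  obtain ⟨a, ha, rfl⟩ :=
    mem_totallyRealSubfield.mp (h totallyRealSubfield fun _ => sqrt_mem_totallyRealSubfield)
  have halg : IsAlgebraic ℚ (a : ℝ) := mem_algebraicClosure_iff.mp a.2
  have hmin : minpoly ℚ ((a : ℝ) : ℂ) = minpoly ℚ a :=
    (minpoly.algebraMap_eq (A := ℚ) (algebraMap ℝ ℂ).injective (a : ℝ)).trans
      (minpoly.algebraMap_eq (A := ℚ) (algebraMap (algebraicClosure ℚ ℝ) ℝ).injective a)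
  refine ⟨halg.algebraMap (A := ℂ), fun z hz => ?_⟩
  rw [hmin] at hz
  have : Algebra.IsAlgebraic ℚ (algebraicClosure ℚ ℝ) := algebraicClosure.isAlgebraic ℚ ℝ
  have hne : minpoly ℚ a ≠ 0 := minpoly.ne_zero (Algebra.IsIntegral.isIntegral a)
  have hroot : z ∈ (minpoly ℚ a).rootSet ℂ := (mem_rootSet_of_ne hne).mpr hz
  rw [← Algebra.IsAlgebraic.range_eval_eq_rootSet_minpoly] at hroot
  obtain ⟨φ, rfl⟩ := hroot
  obtain ⟨r, hr⟩ := ha φ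
  simp only [← hr, Complex.ofReal_im]
end

section
/- Every totally real element of F_{√x} lies in F_{√(1+x²)}: if α is a real number that lies in every subfield L of ℂ closed under taking square roots, and α is totally real, then α lies in every subfield K of ℝ with the property that √(1+x²) ∈ K for all x ∈ K. -/
/-!
Let `K` be a subfield of `ℝ` closed under `x ↦ √(1 + x²)`, and let `N ⊆ ℂ` be the splitting
field of the minimal polynomial of `α`.

* The degree `[N : ℚ]` is a power of `2`. The elements of `ℂ` lying in some finite tower of
  quadratic extensions of `ℚ` form a field closed under square roots (`towerField`), and so do
  the algebraic numbers all of whose conjugates lie in it. Hence every conjugate of `α` lies in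
  `towerField` (`conj_mem_towerField`), so `N ⊆ towerField`, and a primitive element of `N` lies
  in a tower of degree `2 ^ k` (`QuadTower.finrank_eq`).

* A number `d ∈ K` all of whose conjugates are real and nonnegative has `√d ∈ K`
  (`sqrt_mem_of_totally_nonneg`). By Vieta the coefficients of the minimal polynomial of `d`
  alternate in sign, so separating even from odd powers of `d` in the minimal equation gives
  `E = d * O`, where `E` and `O` are combinations of even powers of `d` with nonnegative rational
  coefficients. The nonnegative reals whose square root lies in `K` are closed under sums,
  products and quotients, so they contain `E`, `O` and, for `d ≠ 0`, also `d = E / O`.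

* `N ⊆ K` (`galois_real_mem`). Otherwise put `M = N ∩ K`. As `N / M` is Galois of degree a
  nontrivial power of `2`, Galois theory and Sylow give `x ∈ N` outside `M` with `x² ∈ M`
  (`exists_sq_mem_of_finrank_two_pow`). The conjugates of `x²` are squares of elements of `N`,
  which are real because `α` is totally real; so `√(x²) = |x|` lies in `K`, a contradiction.
-/

open Polynomial

open IntermediateField Module

/-! ### Towers of quadratic extensions -/

/-- `QuadTower F`: the field `F` is obtained from `ℚ` by finitely many successive adjunctions of
a square root of an element of the field constructed so far. A step may be trivial. -/
inductive QuadTower : IntermediateField ℚ ℂ → Prop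
  | bot : QuadTower ⊥
  | step (F : IntermediateField ℚ ℂ) (z : ℂ) (hF : QuadTower F) (hz : z ^ 2 ∈ F) :
      QuadTower (F ⊔ ℚ⟮z⟯)

theorem QuadTower.sup {F G : IntermediateField ℚ ℂ} (hF : QuadTower F) (hG : QuadTower G) :
    QuadTower (F ⊔ G) := by
  induction hG with
  | bot => simpa using hF
  | step G z _ hz ih =>
    rw [← sup_assoc]
    exact QuadTower.step _ z ih (le_sup_right (a := F) hz)

theorem QuadTower.finrank_eq {F : IntermediateField ℚ ℂ} (hF : QuadTower F) :
    ∃ m : ℕ, finrank ℚ F = 2 ^ m := by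
  induction hF with
  | bot => exact ⟨0, by simp⟩
  | step F z _ hz ih =>
    obtain ⟨m, hm⟩ := ih
    rw [← restrictScalars_adjoin_eq_sup]
    have hmul : finrank ℚ F * finrank F F⟮z⟯ =
        finrank ℚ (restrictScalars ℚ F⟮z⟯) := finrank_mul_finrank ℚ F F⟮z⟯
    have hroot : aeval z (X ^ 2 - C (⟨z ^ 2, hz⟩ : F)) = 0 := by
      simp [IntermediateField.algebraMap_apply]
    have hmonic : (X ^ 2 - C (⟨z ^ 2, hz⟩ : F)).Monic := monic_X_pow_sub_C _ two_ne_zero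
    have hint : IsIntegral F z := ⟨_, hmonic, hroot⟩
    have hle : finrank F F⟮z⟯ ≤ 2 := by
      rw [adjoin.finrank hint]
      simpa using natDegree_le_of_dvd (minpoly.dvd F z hroot) hmonic.ne_zero
    have hpos : 0 < finrank F F⟮z⟯ := by
      rw [adjoin.finrank hint]
      exact minpoly.natDegree_pos hint
    obtain ⟨k, hk⟩ : ∃ k : ℕ, finrank ℚ F * finrank F F⟮z⟯ = 2 ^ k := by
      rw [hm]
      interval_cases finrank F F⟮z⟯
      · exact ⟨m, by simp⟩
      · exact ⟨m + 1, by ring⟩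
    exact ⟨k, hmul.symm.trans hk⟩

/-- The field of complex numbers lying in some finite tower of quadratic extensions of `ℚ`. It is
defined as a supremum of subfields; by directedness it is their union (`mem_towerField`). -/
noncomputable def towerField : Subfield ℂ :=
  ⨆ F : {F : IntermediateField ℚ ℂ // QuadTower F}, F.1.toSubfield

theorem mem_towerField {z : ℂ} :
    z ∈ towerField ↔ ∃ F : IntermediateField ℚ ℂ, QuadTower F ∧ z ∈ F := by
  have : Nonempty {F : IntermediateField ℚ ℂ // QuadTower F} := ⟨⟨⊥, .bot⟩⟩
  rw [towerField, Subfield.mem_iSup_of_directed]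
  · simp
  · rintro ⟨F, hF⟩ ⟨G, hG⟩
    exact ⟨⟨F ⊔ G, hF.sup hG⟩, fun x hx => le_sup_left (a := F) hx,
      fun x hx => le_sup_right (a := F) hx⟩

theorem towerField_sqrt {z : ℂ} (hz : z ^ 2 ∈ towerField) : z ∈ towerField := by
  rw [mem_towerField] at hz ⊢
  obtain ⟨F, hF, hzF⟩ := hz
  exact ⟨_, hF.step F z hzF, le_sup_right (a := F) (mem_adjoin_simple_self ℚ z)⟩

/-- All conjugates of an element of `F_{√x}` lie in `towerField`. The hypothesis `MemFSqrt` is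
applied to the field of algebraic numbers that every embedding of the algebraic closure of `ℚ`
sends into `towerField`. -/
theorem conj_mem_towerField {α : ℂ} (h : MemFSqrt α) (hα : IsAlgebraic ℚ α) {z : ℂ}
    (hz : aeval z (minpoly ℚ α) = 0) : z ∈ towerField := by
  let A := algebraicClosure ℚ ℂ
  have : Algebra.IsAlgebraic ℚ A := algebraicClosure.isAlgebraic ℚ ℂ
  let L : Subfield ℂ :=
    (⨅ σ : A →ₐ[ℚ] ℂ, towerField.comap (σ : A →+* ℂ)).map (A.val : A →+* ℂ)
  have hL : ∀ w : ℂ, w ∈ L ↔ ∃ a : A, (∀ σ : A →ₐ[ℚ] ℂ, σ a ∈ towerField) ∧ (a : ℂ) = w := by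
    intro w
    simp [L, Subfield.mem_map, Subfield.mem_iInf, Subfield.mem_comap]
  have hαL : α ∈ L := by
    refine h L fun w hw => ?_
    obtain ⟨a, ha, haw⟩ := (hL _).1 hw
    have hwA : w ∈ A := by
      rw [mem_algebraicClosure_iff]
      have : IsAlgebraic ℚ (w ^ 2) := haw ▸ mem_algebraicClosure_iff.1 a.2
      exact this.of_pow two_pos
    refine (hL w).2 ⟨⟨w, hwA⟩, fun σ => towerField_sqrt ?_, rfl⟩
    have : (⟨w, hwA⟩ : A) ^ 2 = a := Subtype.ext (by simp [haw])
    rw [← map_pow, this]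
    exact ha σ
  obtain ⟨a, ha, rfl⟩ := (hL α).1 hαL
  have hmin : minpoly ℚ (a : ℂ) = minpoly ℚ a :=
    minpoly.algebraMap_eq (algebraMap A ℂ).injective a
  rw [hmin] at hz
  obtain ⟨σ, hσ⟩ := exists_algHom_of_splits_of_aeval (K := ℂ) (E := A)
    (fun s => ⟨(Algebra.IsAlgebraic.isAlgebraic (R := ℚ) s).isIntegral,
      IsAlgClosed.splits _⟩) hz
  exact hσ ▸ ha σ

/-! ### Galois extensions of degree a power of two -/

/-- A nontrivial Galois extension of `2`-power degree contains a quadratic subextension, namely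
the fixed field of a subgroup of index `2`, and such a subextension is generated by a square
root. -/
theorem exists_sq_mem_of_finrank_two_pow {M N : Type*} [Field M] [Field N] [CharZero M]
    [Algebra M N] [FiniteDimensional M N] [IsGalois M N] {m : ℕ}
    (hm : finrank M N = 2 ^ (m + 1)) :
    ∃ x : N, x ∉ Set.range (algebraMap M N) ∧ x ^ 2 ∈ Set.range (algebraMap M N) := by
  have hcard : Nat.card Gal(N/M) = 2 ^ (m + 1) := by rw [IsGalois.card_aut_eq_finrank, hm]
  obtain ⟨H, hH⟩ := Sylow.exists_subgroup_card_pow_prime (G := Gal(N/M)) 2 (n := m)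
    (by rw [hcard]; exact pow_dvd_pow 2 m.le_succ)
  let F := fixedField H
  have hF : finrank F N = 2 ^ m := by rw [finrank_fixedField_eq_card, hH]
  have h2 : finrank M F = 2 := by
    have := finrank_mul_finrank M F N
    rw [hF, hm, pow_succ'] at this
    exact Nat.eq_of_mul_eq_mul_right (by positivity) this
  have : Algebra.IsQuadraticExtension M F := ⟨h2⟩
  have hprim : (primitiveRoots (finrank M F) M).Nonempty := by
    rw [h2]
    exact ⟨-1, (mem_primitiveRoots two_pos).2 (IsPrimitiveRoot.neg_one 0 (by norm_num))⟩
  obtain ⟨x, ⟨c, hc⟩, hx⟩ := exists_root_adjoin_eq_top_of_isCyclic M F hprim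
  rw [h2] at hc
  refine ⟨x, ?_, c, ?_⟩
  · rintro ⟨y, hy⟩
    have hxy : algebraMap M F y = x := Subtype.ext hy
    have hbot : M⟮x⟯ = ⊥ := adjoin_simple_eq_bot_iff.2 (mem_bot.2 ⟨y, hxy⟩)
    have h1 : finrank M F = 1 := by
      rw [← finrank_top' (F := M) (E := F), ← hx, hbot, IntermediateField.finrank_bot]
    omega
  · exact congrArg Subtype.val hc

/-! ### Square roots of totally nonnegative numbers -/

/-- If all conjugates of `d` are real and nonnegative, the coefficients of its minimal polynomial
alternate in sign: by Vieta they are, up to sign, elementary symmetric functions of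
nonnegative reals. -/
theorem minpoly_coeff_sign {d : ℝ} (hd : IsIntegral ℚ d)
    (hpos : ∀ z : ℂ, aeval z (minpoly ℚ d) = 0 → ∃ r : ℝ, 0 ≤ r ∧ z = r) (i : ℕ) :
    0 ≤ (-1) ^ ((minpoly ℚ d).natDegree + i) * (minpoly ℚ d).coeff i := by
  set p := minpoly ℚ d with hp
  have hp0 : p ≠ 0 := minpoly.ne_zero hd
  rcases lt_or_ge p.natDegree i with hi | hi
  · simp [coeff_eq_zero_of_natDegree_lt hi]
  have hmonic : (p.map (algebraMap ℚ ℂ)).Monic := (minpoly.monic hd).map _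
  have hsplit : (p.map (algebraMap ℚ ℂ)).Splits := IsAlgClosed.splits _
  have hco := coeff_eq_esymm_roots_of_splits hsplit (k := i) (by simpa using hi)
  rw [hmonic.leadingCoeff, one_mul, natDegree_map, coeff_map] at hco
  have hroots : ∀ z ∈ (p.map (algebraMap ℚ ℂ)).roots, ∃ r : ℝ, 0 ≤ r ∧ z = r := fun z hz =>
    hpos z (by rwa [mem_roots hmonic.ne_zero, IsRoot, eval_map_algebraMap] at hz)
  have hsym : ∀ s : Multiset ℂ, (∀ z ∈ s, ∃ r : ℝ, 0 ≤ r ∧ z = r) →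
      ∀ k, ∃ r : ℝ, 0 ≤ r ∧ s.esymm k = r := by
    intro s hs k
    have key : ∀ z ∈ (s.powersetCard k).map Multiset.prod, ∃ r : ℝ, 0 ≤ r ∧ z = r := by
      intro z hz
      obtain ⟨t, ht, rfl⟩ := Multiset.mem_map.1 hz
      refine Multiset.prod_induction (fun z : ℂ => ∃ r : ℝ, 0 ≤ r ∧ z = r) t ?_
        ⟨1, zero_le_one, by simp⟩
        fun z hz => hs z (Multiset.mem_of_le (Multiset.mem_powersetCard.1 ht).1 hz)
      rintro _ _ ⟨a, ha, rfl⟩ ⟨b, hb, rfl⟩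
      exact ⟨a * b, mul_nonneg ha hb, by simp⟩
    refine Multiset.sum_induction (fun z : ℂ => ∃ r : ℝ, 0 ≤ r ∧ z = r) _ ?_
        ⟨0, le_rfl, by simp⟩ key
    rintro _ _ ⟨a, ha, rfl⟩ ⟨b, hb, rfl⟩
    exact ⟨a + b, add_nonneg ha hb, by simp⟩
  obtain ⟨r, hr, hr'⟩ := hsym _ hroots (p.natDegree - i)
  rw [hr'] at hco
  have hcast : (((-1) ^ (p.natDegree + i) * p.coeff i : ℚ) : ℂ) = ((r : ℝ) : ℂ) := by
    push_cast
    rw [show ((p.coeff i : ℚ) : ℂ) = _ from hco, ← mul_assoc, ← pow_add,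
      show p.natDegree + i + (p.natDegree - i) = 2 * p.natDegree by omega, pow_mul]
    simp
  have : (((-1) ^ (p.natDegree + i) * p.coeff i : ℚ) : ℝ) = r := by exact_mod_cast hcast
  have h0 : (0 : ℝ) ≤ (((-1) ^ (p.natDegree + i) * p.coeff i : ℚ) : ℝ) := this ▸ hr
  exact_mod_cast h0

/-- This is `√(a + b) = √a * √(1 + (√b / √a)²)`. -/
theorem sqrt_add_mem {K : Subfield ℝ} (hK : ∀ x ∈ K, √(1 + x ^ 2) ∈ K)
    {a b : ℝ} (ha : 0 ≤ a) (hb : 0 ≤ b) (ha' : √a ∈ K) (hb' : √b ∈ K) :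
    √(a + b) ∈ K := by
  rcases ha.eq_or_lt with rfl | ha0
  · simpa using hb'
  have h := K.mul_mem ha' (hK _ (K.div_mem hb' ha'))
  rwa [← Real.sqrt_mul ha, div_pow, Real.sq_sqrt ha, Real.sq_sqrt hb, mul_add, mul_one,
    mul_div_cancel₀ _ ha0.ne'] at h

theorem sqrt_sum_mem {K : Subfield ℝ} (hK : ∀ x ∈ K, √(1 + x ^ 2) ∈ K)
    {ι : Type*} (s : Finset ι) (f : ι → ℝ)
    (hf : ∀ i ∈ s, 0 ≤ f i ∧ √(f i) ∈ K) : 0 ≤ ∑ i ∈ s, f i ∧ √(∑ i ∈ s, f i) ∈ K := by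
  refine Finset.sum_induction f (fun x => 0 ≤ x ∧ √x ∈ K) ?_ (by simp) hf
  rintro a b ⟨ha, ha'⟩ ⟨hb, hb'⟩
  exact ⟨add_nonneg ha hb, sqrt_add_mem hK ha hb ha' hb'⟩

theorem sqrt_nat_mem {K : Subfield ℝ} (hK : ∀ x ∈ K, √(1 + x ^ 2) ∈ K)
    (n : ℕ) : √(n : ℝ) ∈ K := by
  simpa using (sqrt_sum_mem hK (Finset.range n) (fun _ => 1) (by simp)).2

theorem sqrt_rat_mem {K : Subfield ℝ} (hK : ∀ x ∈ K, √(1 + x ^ 2) ∈ K)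
    {q : ℚ} (hq : 0 ≤ q) : √(q : ℝ) ∈ K := by
  have h : (q : ℝ) = (q.num.toNat : ℝ) / (q.den : ℝ) := by
    rw [← Int.cast_natCast (R := ℝ) q.num.toNat, Int.toNat_of_nonneg (Rat.num_nonneg.2 hq)]
    exact Rat.cast_def q
  rw [h, Real.sqrt_div (Nat.cast_nonneg _)]
  exact K.div_mem (sqrt_nat_mem hK _) (sqrt_nat_mem hK _)

/-- A totally nonnegative `d` in `K` is a quotient `E / O` of sums of nonnegative rational
multiples of even powers of `d`, so its square root lies in `K`. -/
theorem sqrt_mem_of_totally_nonneg {K : Subfield ℝ} (hK : ∀ x ∈ K, √(1 + x ^ 2) ∈ K)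
    {d : ℝ} (hdK : d ∈ K) (hd : IsIntegral ℚ d)
    (hpos : ∀ z : ℂ, aeval z (minpoly ℚ d) = 0 → ∃ r : ℝ, 0 ≤ r ∧ z = r) : √d ∈ K := by
  set p := minpoly ℚ d with hp
  set n := p.natDegree with hn
  have hd0 : 0 ≤ d := by
    obtain ⟨r, hr, hdr⟩ := hpos (d : ℂ) (by
      have := congrArg (algebraMap ℝ ℂ) (minpoly.aeval ℚ d)
      rwa [map_zero, ← aeval_algebraMap_apply] at this)
    rw [Complex.ofReal_inj.1 hdr]; exact hr
  rcases hd0.eq_or_lt with rfl | hd0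
  · simp [K.zero_mem]
  let c : ℕ → ℚ := fun i => (-1) ^ (n + i) * p.coeff i
  have hc : ∀ i, 0 ≤ c i := minpoly_coeff_sign hd hpos
  have hmem : ∀ i k, Even k → 0 ≤ (c i : ℝ) * d ^ k ∧ √((c i : ℝ) * d ^ k) ∈ K := by
    rintro i k ⟨k, rfl⟩
    have hci : (0 : ℝ) ≤ c i := by exact_mod_cast hc i
    refine ⟨by positivity, ?_⟩
    rw [Real.sqrt_mul hci, ← mul_two, pow_mul, Real.sqrt_sq (by positivity)]
    exact K.mul_mem (sqrt_rat_mem hK (hc i)) (K.pow_mem hdK k)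
  set I := Finset.range (n + 1)
  set E : ℝ := ∑ i ∈ I with Even i, (c i : ℝ) * d ^ i with hE
  set O : ℝ := ∑ i ∈ I with ¬ Even i, (c i : ℝ) * d ^ (i - 1) with hO
  obtain ⟨hE0, hEK⟩ : 0 ≤ E ∧ √E ∈ K := sqrt_sum_mem hK _ _ fun i hi =>
    hmem i i (Finset.mem_filter.1 hi).2
  obtain ⟨hO0, hOK⟩ : 0 ≤ O ∧ √O ∈ K := sqrt_sum_mem hK _ _ fun i hi =>
    hmem i (i - 1) (Nat.Odd.sub_odd (Nat.not_even_iff_odd.1 (Finset.mem_filter.1 hi).2) odd_one)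
  have hdO : d * O = ∑ i ∈ I with ¬ Even i, (c i : ℝ) * d ^ i := by
    rw [hO, Finset.mul_sum]
    refine Finset.sum_congr rfl fun i hi => ?_
    obtain ⟨k, rfl⟩ := Nat.not_even_iff_odd.1 (Finset.mem_filter.1 hi).2
    simp only [Nat.add_sub_cancel]
    ring
  have heval : ∑ i ∈ I, (p.coeff i : ℝ) * d ^ i = 0 := by
    have := minpoly.aeval ℚ d
    rw [aeval_eq_sum_range] at this
    simpa [Algebra.smul_def] using this
  have hEO : E = d * O := by
    have hz : ∑ i ∈ I, (-1 : ℝ) ^ i * (c i : ℝ) * d ^ i = 0 := by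
      have : ∀ i ∈ I, (-1 : ℝ) ^ i * (c i : ℝ) * d ^ i =
          (-1) ^ n * ((p.coeff i : ℝ) * d ^ i) := by
        intro i _
        have h1 : (-1 : ℝ) ^ i * (-1) ^ i = 1 := by rw [← mul_pow]; simp
        simp only [c]
        push_cast
        rw [pow_add]
        linear_combination ((-1) ^ n * (p.coeff i : ℝ) * d ^ i) * h1
      rw [Finset.sum_congr rfl this, ← Finset.mul_sum, heval, mul_zero]
    rw [← Finset.sum_filter_add_sum_filter_not I (fun i => Even i)] at hz
    have h1 : ∑ i ∈ I with Even i, (-1 : ℝ) ^ i * (c i : ℝ) * d ^ i = E :=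
      Finset.sum_congr rfl fun i hi => by rw [(Finset.mem_filter.1 hi).2.neg_one_pow, one_mul]
    have h2 : ∑ i ∈ I with ¬ Even i, (-1 : ℝ) ^ i * (c i : ℝ) * d ^ i = -(d * O) := by
      rw [hdO, ← Finset.sum_neg_distrib]
      refine Finset.sum_congr rfl fun i hi => ?_
      rw [(Nat.not_even_iff_odd.1 (Finset.mem_filter.1 hi).2).neg_one_pow]
      ring
    rw [h1, h2] at hz
    linarith
  -- If `O = 0` then also `E = 0`, but `E + d * O` is at least its leading term `d ^ n`.
  have hOne : O ≠ 0 := by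
    intro hO'
    have hsum : E + d * O = ∑ i ∈ I, (c i : ℝ) * d ^ i := by
      rw [hdO, hE, Finset.sum_filter_add_sum_filter_not]
    have hle : (c n : ℝ) * d ^ n ≤ ∑ i ∈ I, (c i : ℝ) * d ^ i :=
      Finset.single_le_sum (f := fun i => (c i : ℝ) * d ^ i)
        (fun i _ => mul_nonneg (by exact_mod_cast hc i) (by positivity))
        (Finset.self_mem_range_succ n)
    have hcn : c n = 1 := by
      have : p.coeff n = 1 := (minpoly.monic hd).coeff_natDegree
      simp [c, this, ← two_mul]
    rw [← hsum, hEO, hO', hcn] at hle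
    have : 0 < d ^ n := by positivity
    simp at hle
    linarith
  have hdiv : d = E / O := by rw [hEO, mul_div_cancel_right₀ _ hOne]
  rw [hdiv, Real.sqrt_div hE0]
  exact K.div_mem hEK hOK

/-- A finite Galois extension of `ℚ` contained in the reals and of `2`-power degree is contained
in `K`. -/
theorem galois_real_mem {K : Subfield ℝ} (hK : ∀ x ∈ K, √(1 + x ^ 2) ∈ K)
    (N : IntermediateField ℚ ℂ) [FiniteDimensional ℚ N] [hGal : IsGalois ℚ N]
    (hreal : ∀ z ∈ N, z.im = 0) {k : ℕ} (hk : finrank ℚ N ∣ 2 ^ k) :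
    ∀ z ∈ N, ∃ r ∈ K, (r : ℂ) = z := by
  -- `M` is `N ∩ K`, viewed inside `N`.
  let M : IntermediateField ℚ N :=
    Subfield.toIntermediateField ((K.map Complex.ofRealHom).comap (N.val : N →+* ℂ)) (by
      intro q
      refine ⟨(q : ℝ), SubfieldClass.ratCast_mem K q, ?_⟩
      simp)
  have hM : ∀ z : N, z ∈ M ↔ ∃ r ∈ K, (r : ℂ) = z := fun z => Iff.rfl
  -- It suffices that `[N : M] = 1`; this degree is a power of `2`.
  suffices hdeg : finrank M N = 1 by
    intro z hz
    have htop : M = ⊤ := finrank_eq_one_iff_eq_top.1 hdeg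
    exact (hM ⟨z, hz⟩).1 (htop ▸ mem_top)
  obtain ⟨m, -, hm⟩ := (Nat.dvd_prime_pow Nat.prime_two).1
    ((Dvd.intro_left _ (finrank_mul_finrank ℚ M N)).trans hk)
  rcases m with _ | m
  · simpa using hm
  exfalso
  obtain ⟨x, hx, c, hc⟩ := exists_sq_mem_of_finrank_two_pow hm
  refine hx ⟨⟨x, ?_⟩, rfl⟩
  have hofReal : ∀ w ∈ N, ((w.re : ℝ) : ℂ) = w := fun w hw =>
    Complex.ext rfl (by simp [hreal w hw])
  set r : ℝ := (x : ℂ).re with hr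
  have hrx : (r : ℂ) = x := hofReal _ x.2
  have hdx : ((r ^ 2 : ℝ) : ℂ) = ((x ^ 2 : N) : ℂ) := by simp [hrx]
  have hdK : r ^ 2 ∈ K := by
    obtain ⟨s, hs, hsx⟩ := (hM (x ^ 2)).1 (hc ▸ c.2)
    rw [← hdx] at hsx
    exact Complex.ofReal_inj.1 hsx ▸ hs
  have hmin : minpoly ℚ (r ^ 2) = minpoly ℚ (x ^ 2) := by
    rw [← minpoly.algebraMap_eq (algebraMap ℝ ℂ).injective (r ^ 2),
      ← minpoly.algebraMap_eq (algebraMap N ℂ).injective (x ^ 2)]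
    exact congrArg _ hdx
  have hint : IsIntegral ℚ (r ^ 2) := by
    rw [← isIntegral_algebraMap_iff (algebraMap ℝ ℂ).injective]
    have : algebraMap ℝ ℂ (r ^ 2) = algebraMap N ℂ (x ^ 2) := hdx
    rw [this]
    exact (Algebra.IsIntegral.isIntegral (x ^ 2)).algebraMap
  have hsqrt : √(r ^ 2) ∈ K := by
    refine sqrt_mem_of_totally_nonneg hK hdK hint fun z hz => ?_
    rw [hmin] at hz
    obtain ⟨σ, rfl⟩ := exists_algHom_of_splits_of_aeval (K := ℂ) (E := N)
      (fun s => ⟨Algebra.IsIntegral.isIntegral (R := ℚ) s, IsAlgClosed.splits _⟩) hz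
    have hσ : σ x ∈ N := by
      have : σ x ∈ σ.fieldRange := ⟨x, rfl⟩
      -- The normality instance is supplied by hand: instance search sees two different
      -- (definitionally equal) `ℚ`-algebra structures on `N`.
      exact (@AlgHom.fieldRange_of_normal ℚ ℂ _ _ _ N hGal.to_normal σ).le this
    refine ⟨(σ x).re ^ 2, sq_nonneg _, ?_⟩
    rw [map_pow, Complex.ofReal_pow, hofReal _ hσ]
  rw [Real.sqrt_sq_eq_abs] at hsqrt
  refine (hM x).2 ⟨r, ?_, hrx⟩
  rcases abs_choice r with h | h <;> rw [h] at hsqrt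
  · exact hsqrt
  · simpa using K.neg_mem hsqrt

theorem memFSqrt_totallyReal_memFSqrtOneAddSq (α : ℝ) (h : MemFSqrt (α : ℂ))
    (hTR : IsTotallyReal (α : ℂ)) : MemFSqrtOneAddSq α := by
  intro K hK
  obtain ⟨halg, hreal⟩ := hTR
  set p := minpoly ℚ (α : ℂ) with hp
  have hp0 : p ≠ 0 := minpoly.ne_zero halg.isIntegral
  let N : IntermediateField ℚ ℂ := adjoin ℚ (p.rootSet ℂ)
  have : p.IsSplittingField ℚ N := adjoin_rootSet_isSplittingField (IsAlgClosed.splits _)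
  have : FiniteDimensional ℚ N := IsSplittingField.finiteDimensional N p
  have : IsGalois ℚ N :=
    IsGalois.of_separable_splitting_field (p := p) (minpoly.irreducible halg.isIntegral).separable
  have hNreal : ∀ z ∈ N, z.im = 0 := by
    have hle : N ≤ (Complex.ofRealAm.restrictScalars ℚ).fieldRange := by
      refine adjoin_le_iff.2 fun z hz => ⟨z.re, ?_⟩
      exact Complex.ext rfl (by simp [hreal z (mem_rootSet.1 hz).2])
    intro z hz
    obtain ⟨r, rfl⟩ := hle hz
    simp
  have hNtower : ∀ z ∈ N, z ∈ towerField := by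
    have hle : N ≤ towerField.toIntermediateField (fun q : ℚ => by
        simp) :=
      adjoin_le_iff.2 fun z hz => conj_mem_towerField h halg (mem_rootSet.1 hz).2
    exact fun z hz => hle hz
  obtain ⟨β, hβ⟩ := Field.exists_primitive_element ℚ N
  obtain ⟨F, hF, hβF⟩ := mem_towerField.1 (hNtower β β.2)
  obtain ⟨k, hk⟩ := hF.finrank_eq
  have hdvd : finrank ℚ N ∣ 2 ^ k := by
    rw [← hk]
    refine finrank_dvd_of_le_right fun z hz => ?_
    have hz' : (⟨z, hz⟩ : N) ∈ ℚ⟮β⟯ := hβ ▸ mem_top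
    have hle : ℚ⟮β⟯ ≤ F.comap N.val := adjoin_simple_le_iff.2 hβF
    exact hle hz'
  obtain ⟨r, hrK, hr⟩ := galois_real_mem hK N hNreal hdvd α
    (subset_adjoin ℚ _ (mem_rootSet.2 ⟨hp0, minpoly.aeval ℚ (α : ℂ)⟩))
  exact Complex.ofReal_inj.1 hr ▸ hrK
end

section
/- A real number α belongs to F_{√(1+x²)} if and only if α belongs to F_{√x} and α is totally real. -/
/-!
Write `F = F_{√(1+x²)}`. The numbers that are totally real and lie in `F_{√x}` form a field closed
under `√(1+x²)`, since a conjugate of `√(1+x²)` squares to `1 + r²` with `r` real; hence `F` is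
contained in it.

Conversely, let `α` be totally real and in `F_{√x}`.

* Every element of `F_{√x}` is fixed by `σ ^ 2 ^ k` for some `k` and all `σ` in the absolute Galois
  group: such elements form a field, and if `σ ^ 2 ^ k` fixes `z²` then it maps `z` to `±z`
  (`mem_twoPowerField_of_sq`). So the Galois closure `E` of `ℚ(α)` has a 2-group as Galois group,
  and `E` is totally real.
* A chain of subgroups of index 2 shows that `E` is obtained from `ℚ` by successively adjoining
  `δ ∈ E` with `δ²` already constructed (`mem_of_isPGroup_two`).
* For such `δ`, the number `d = δ²` has only nonnegative real conjugates, so the minimal polynomial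
  of `-d` has nonnegative coefficients. Separating its even and odd parts gives `d = B / C`, where
  `B` and `C` are nonnegative rational combinations of even powers of `d`. In a field closed under
  `√(1+x²)`, the elements with a square root in the field are closed under sums, products and
  quotients and contain the nonnegative rationals, so `√d = |δ|` lies in the field
  (`sqrt_mem_of_coeff_nonneg`, `mem_of_sq_mem_of_totallyReal`).

Galois theory takes place in an algebraic closure `A` of `ℚ` with an embedding `ι : A → ℂ` whose
image consists of all algebraic numbers.
-/


open Polynomial

/-! ### Nonnegative elements whose square root stays in the field -/

/-- `x` is a nonnegative element of `K` whose square root lies in `K`. When `K` is closed under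
`x ↦ √(1 + x²)`, such elements form a cone that is also closed under quotients. -/
def SqrtMem (K : Subfield ℝ) (x : ℝ) : Prop := 0 ≤ x ∧ √x ∈ K

namespace SqrtMem

variable {K : Subfield ℝ} {x y : ℝ}

lemma zero : SqrtMem K 0 := ⟨le_rfl, by simp [K.zero_mem]⟩

lemma one : SqrtMem K 1 := ⟨zero_le_one, by simp [K.one_mem]⟩

lemma add (hK : ∀ x ∈ K, √(1 + x ^ 2) ∈ K) (hx : SqrtMem K x) (hy : SqrtMem K y) :
    SqrtMem K (x + y) := by
  refine ⟨add_nonneg hx.1 hy.1, ?_⟩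
  rcases hx.1.eq_or_lt with h | h
  · simpa [← h] using hy.2
  · have key : √(x + y) = √x * √(1 + (√y / √x) ^ 2) := by
      rw [← Real.sqrt_mul hx.1, div_pow, Real.sq_sqrt hx.1, Real.sq_sqrt hy.1]
      congr 1
      field_simp
    rw [key]
    exact K.mul_mem hx.2 (hK _ (K.div_mem hy.2 hx.2))

lemma mul (hx : SqrtMem K x) (hy : SqrtMem K y) : SqrtMem K (x * y) :=
  ⟨mul_nonneg hx.1 hy.1, by rw [Real.sqrt_mul hx.1]; exact K.mul_mem hx.2 hy.2⟩

lemma div (hx : SqrtMem K x) (hy : SqrtMem K y) : SqrtMem K (x / y) :=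
  ⟨div_nonneg hx.1 hy.1, by rw [Real.sqrt_div hx.1]; exact K.div_mem hx.2 hy.2⟩

lemma even_pow (hx : x ∈ K) {i : ℕ} (hi : Even i) : SqrtMem K (x ^ i) := by
  obtain ⟨j, rfl⟩ := hi
  refine ⟨by rw [← two_mul, pow_mul]; positivity, ?_⟩
  rw [← mul_two, pow_mul, Real.sqrt_sq_eq_abs]
  rcases abs_choice (x ^ j) with h | h <;> rw [h]
  · exact K.pow_mem hx _
  · exact K.neg_mem (K.pow_mem hx _)

lemma natCast (hK : ∀ x ∈ K, √(1 + x ^ 2) ∈ K) (n : ℕ) : SqrtMem K n := by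
  induction n with
  | zero => simpa using zero
  | succ n ih => simpa using ih.add hK one

lemma ratCast (hK : ∀ x ∈ K, √(1 + x ^ 2) ∈ K) {q : ℚ} (hq : 0 ≤ q) : SqrtMem K (q : ℝ) := by
  have h : (q : ℝ) = (q.num.toNat : ℝ) / (q.den : ℝ) := by
    have h1 : ((q.num.toNat : ℤ) : ℝ) = (q.num : ℝ) := by
      rw [Int.toNat_of_nonneg (Rat.num_nonneg.2 hq)]
    rw [Int.cast_natCast] at h1
    rw [h1, ← Rat.cast_def]
  rw [h]
  exact (natCast hK _).div (natCast hK _)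

lemma sum (hK : ∀ x ∈ K, √(1 + x ^ 2) ∈ K) {s : Finset ℕ} {f : ℕ → ℝ}
    (h : ∀ i ∈ s, SqrtMem K (f i)) : SqrtMem K (∑ i ∈ s, f i) := by
  classical
  induction s using Finset.induction_on with
  | empty => simpa using zero
  | insert a s ha ih =>
    rw [Finset.sum_insert ha]
    exact (h a (by simp)).add hK (ih fun i hi => h i (by simp [hi]))

end SqrtMem

/-- If `-d < 0` is a root of a rational polynomial with nonnegative coefficients, then separating
the terms of even and odd degree writes `d` as a quotient of two nonnegative rational combinations
of even powers of `d`; hence `√d` can be extracted in `K`. -/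
lemma sqrt_mem_of_coeff_nonneg {K : Subfield ℝ} (hK : ∀ x ∈ K, √(1 + x ^ 2) ∈ K) {d : ℝ}
    (hdK : d ∈ K) (hd : 0 < d) {q : ℚ[X]} (hq : q ≠ 0) (hc : ∀ i, 0 ≤ q.coeff i)
    (h : aeval (-d) q = 0) : √d ∈ K := by
  classical
  set s := Finset.range (q.natDegree + 1) with hs
  set ev : ℝ := ∑ i ∈ s with Even i, (q.coeff i : ℝ) * d ^ i with hev
  set od : ℝ := ∑ i ∈ s with ¬ Even i, (q.coeff i : ℝ) * d ^ (i - 1) with hod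
  have hcR : ∀ i, (0 : ℝ) ≤ q.coeff i := fun i => by exact_mod_cast hc i
  have hodd : ∑ i ∈ s with ¬ Even i, (q.coeff i : ℝ) * d ^ i = d * od := by
    rw [hod, Finset.mul_sum]
    refine Finset.sum_congr rfl fun i hi => ?_
    obtain ⟨j, rfl⟩ := Nat.not_even_iff_odd.1 (Finset.mem_filter.1 hi).2
    rw [Nat.add_sub_cancel]
    ring
  have hsplit : ev = d * od := by
    rw [aeval_eq_sum_range, ← hs, ← Finset.sum_filter_add_sum_filter_not s (fun i => Even i)] at h
    have h1 : ∑ i ∈ s with Even i, q.coeff i • (-d) ^ i = ev :=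
      Finset.sum_congr rfl fun i hi => by
        rw [(Finset.mem_filter.1 hi).2.neg_pow, Rat.smul_def]
    have h2 : ∑ i ∈ s with ¬ Even i, q.coeff i • (-d) ^ i = -(d * od) := by
      rw [← hodd, ← Finset.sum_neg_distrib]
      exact Finset.sum_congr rfl fun i hi => by
        rw [(Nat.not_even_iff_odd.1 (Finset.mem_filter.1 hi).2).neg_pow, Rat.smul_def, mul_neg]
    linarith
  have hevS : SqrtMem K ev := SqrtMem.sum hK fun i hi =>
    (SqrtMem.ratCast hK (hc i)).mul (SqrtMem.even_pow hdK (Finset.mem_filter.1 hi).2)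
  have hodS : SqrtMem K od := SqrtMem.sum hK fun i hi => by
    refine (SqrtMem.ratCast hK (hc i)).mul (SqrtMem.even_pow hdK ?_)
    obtain ⟨j, rfl⟩ := Nat.not_even_iff_odd.1 (Finset.mem_filter.1 hi).2
    simp
  have hpos : 0 < ev + d * od := by
    rw [← hodd, hev, Finset.sum_filter_add_sum_filter_not s (fun i => Even i)]
    refine Finset.sum_pos' (fun i _ => mul_nonneg (hcR i) (by positivity))
      ⟨q.natDegree, by simp [hs], mul_pos ?_ (by positivity)⟩
    exact (hcR _).lt_of_ne fun h0 => hq (leadingCoeff_eq_zero.1 (by exact_mod_cast h0.symm))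
  have hne : od ≠ 0 := by
    rintro h0
    rw [hsplit, h0] at hpos
    simp at hpos
  have hdq : d = ev / od := by
    rw [hsplit]
    field_simp
  rw [hdq]
  exact (hevS.div hodS).2

/-- A monic rational polynomial all of whose complex roots are nonpositive reals has nonnegative
coefficients. -/
lemma coeff_nonneg_of_roots_nonpos {q : ℚ[X]} (hq : q.Monic)
    (hr : ∀ z : ℂ, aeval z q = 0 → ∃ t : ℝ, 0 ≤ t ∧ z = -(t : ℂ)) (i : ℕ) : 0 ≤ q.coeff i := by
  have key : ∀ s : Multiset ℂ, (∀ z ∈ s, ∃ t : ℝ, 0 ≤ t ∧ z = -(t : ℂ)) →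
      ∀ i, ∃ t : ℝ, 0 ≤ t ∧ ((s.map fun z => X - C z).prod).coeff i = (t : ℂ) := by
    intro s
    induction s using Multiset.induction_on with
    | empty =>
      intro _ i
      by_cases hi : i = 0
      · exact ⟨1, zero_le_one, by simp [hi]⟩
      · exact ⟨0, le_rfl, by simp [coeff_one, hi]⟩
    | cons a s ih =>
      intro hs i
      obtain ⟨t, ht, rfl⟩ := hs a (by simp)
      have ih' := ih fun z hz => hs z (by simp [hz])
      rw [Multiset.map_cons, Multiset.prod_cons]
      obtain ⟨v, hv, hv'⟩ := ih' i
      cases i with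
      | zero => exact ⟨t * v, by positivity, by simp [mul_coeff_zero, hv']⟩
      | succ i =>
        obtain ⟨u, hu, hu'⟩ := ih' i
        exact ⟨u + t * v, by positivity, by
          rw [C_neg, sub_neg_eq_add, add_mul, coeff_add, coeff_X_mul, coeff_C_mul, hu', hv']
          push_cast
          ring⟩
  obtain ⟨t, ht, h⟩ := key (q.map (algebraMap ℚ ℂ)).roots (fun z hz => by
    rw [mem_roots', IsRoot.def, eval_map_algebraMap] at hz
    exact hr z hz.2) i
  rw [← (IsAlgClosed.splits (q.map (algebraMap ℚ ℂ))).eq_prod_roots_of_monic (hq.map _),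
    coeff_map, eq_ratCast] at h
  have h' : ((q.coeff i : ℝ)) = t := by exact_mod_cast h
  exact_mod_cast h' ▸ ht

/-! ### Galois 2-extensions -/

/-- In a finite Galois extension whose group is a 2-group, every element is reached from the base
field by successive square roots taken inside the extension. -/
lemma mem_of_isPGroup_two {F E : Type*} [Field F] [CharZero F] [Field E] [Algebra F E]
    [FiniteDimensional F E] [IsGalois F E] (hG : IsPGroup 2 Gal(E/F)) (M : Subfield E)
    (hbot : ∀ q : F, algebraMap F E q ∈ M) (hsq : ∀ y : E, y ^ 2 ∈ M → y ∈ M) (x : E) : x ∈ M := by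
  have : Fact (Nat.Prime 2) := ⟨Nat.prime_two⟩
  have : CharZero E := charZero_of_injective_algebraMap (algebraMap F E).injective
  obtain ⟨n, hn⟩ := IsPGroup.iff_card.1 hG
  -- Induction on `m`: the fixed field of a subgroup of index `2 ^ m` lies in `M`.
  have key : ∀ m : ℕ, ∀ j : ℕ, j + m = n → ∀ H : Subgroup Gal(E/F), Nat.card H = 2 ^ j →
      ∀ x : E, (∀ f ∈ H, f x = x) → x ∈ M := by
    intro m
    induction m with
    | zero =>
      intro j hj H hH x hx
      have hH' : H = ⊤ := Subgroup.eq_top_of_card_eq _ (by rw [hH, hn, ← hj, add_zero])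
      obtain ⟨q, rfl⟩ := (IsGalois.mem_range_algebraMap_iff_fixed x).2 fun f =>
        hx f (hH' ▸ Subgroup.mem_top f)
      exact hbot q
    | succ m ih =>
      intro j hj H hH x hx
      obtain ⟨H', hH', hle⟩ := Sylow.exists_subgroup_card_pow_succ
        (by rw [hn]; exact pow_dvd_pow 2 (by omega)) hH
      have hidx : (H.subgroupOf H').index = 2 := by
        have h1 := (H.subgroupOf H').card_mul_index
        rw [Nat.card_congr (Subgroup.subgroupOfEquivOfLe hle).toEquiv, hH, hH', pow_succ] at h1
        exact Nat.eq_of_mul_eq_mul_left (by positivity) h1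
      have hmul : ∀ f ∈ H', ∀ g ∈ H', (f * g ∈ H ↔ (f ∈ H ↔ g ∈ H)) := fun f hf g hg => by
        simpa [Subgroup.mem_subgroupOf] using
          Subgroup.mul_mem_iff_of_index_two hidx (a := ⟨f, hf⟩) (b := ⟨g, hg⟩)
      obtain ⟨t, htH', htH⟩ : ∃ t ∈ H', t ∉ H := by
        by_contra! hcon
        have h1 : H = H' := le_antisymm hle hcon
        rw [h1, hH', pow_succ] at hH
        have : 0 < 2 ^ j := by positivity
        omega
      -- An element of `H'` either fixes `x` and `t x`, or interchanges them.
      have hact : ∀ f ∈ H', (f x = x ∧ f (t x) = t x) ∨ (f x = t x ∧ f (t x) = x) := by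
        intro f hf
        by_cases hfH : f ∈ H
        · refine .inl ⟨hx f hfH, ?_⟩
          have h1 : t⁻¹ * (f * t) ∈ H := by
            rw [hmul _ (H'.inv_mem htH') _ (H'.mul_mem hf htH'), hmul _ hf _ htH', H.inv_mem_iff]
            tauto
          have h2 := congrArg t (hx _ h1)
          simpa [AlgEquiv.mul_apply, ← AlgEquiv.mul_apply t t⁻¹] using h2
        · have h1 : t⁻¹ * f ∈ H := by
            rw [hmul _ (H'.inv_mem htH') _ hf, H.inv_mem_iff]
            tauto
          have h2 := congrArg t (hx _ h1)
          have h3 : f * t ∈ H := by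
            rw [hmul _ hf _ htH']
            tauto
          refine .inr ⟨?_, hx _ h3⟩
          simpa [AlgEquiv.mul_apply, ← AlgEquiv.mul_apply t t⁻¹] using h2
      have hadd : x + t x ∈ M := ih (j + 1) (by omega) H' hH' _ fun f hf => by
        rcases hact f hf with ⟨h1, h2⟩ | ⟨h1, h2⟩ <;> rw [map_add, h1, h2]
        exact add_comm _ _
      have hsub : x - t x ∈ M := hsq _ <| ih (j + 1) (by omega) H' hH' _ fun f hf => by
        rcases hact f hf with ⟨h1, h2⟩ | ⟨h1, h2⟩ <;> rw [map_pow, map_sub, h1, h2]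
        ring
      have h2 : (2 : E) ∈ M := by exact_mod_cast natCast_mem M 2
      have hxe : x = ((x + t x) + (x - t x)) / 2 := by ring
      rw [hxe]
      exact M.div_mem (M.add_mem hadd hsub) h2
  exact key n 0 (by simp) ⊥ (by simp) x fun f hf => by
    rw [Subgroup.mem_bot.1 hf]
    rfl

section TwoPower

variable (F A : Type*) [Field F] [Field A] [Algebra F A]

lemma pow_two_pow_fix {F A : Type*} [Field F] [Field A] [Algebra F A] {z : A} {k : ℕ}
    (h : ∀ σ : Gal(A/F), (σ ^ 2 ^ k) z = z) (m : ℕ) (σ : Gal(A/F)) : (σ ^ 2 ^ (k + m)) z = z := by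
  rw [add_comm, pow_add, pow_mul]
  exact h _

/-- The elements fixed by all `2 ^ k`-th powers of automorphisms, for some `k`. For `A` an algebraic
closure of `F` in characteristic 0 this is the union of the finite Galois extensions
whose group is a 2-group. -/
def twoPowerField : IntermediateField F A where
  carrier := {z | ∃ k : ℕ, ∀ σ : Gal(A/F), (σ ^ 2 ^ k) z = z}
  mul_mem' := by
    rintro a b ⟨k, hk⟩ ⟨l, hl⟩
    refine ⟨k + l, fun σ => ?_⟩
    rw [map_mul, pow_two_pow_fix hk, add_comm, pow_two_pow_fix hl]
  add_mem' := by
    rintro a b ⟨k, hk⟩ ⟨l, hl⟩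
    refine ⟨k + l, fun σ => ?_⟩
    rw [map_add, pow_two_pow_fix hk, add_comm k l, pow_two_pow_fix hl]
  algebraMap_mem' r := ⟨0, fun σ => AlgEquiv.commutes _ r⟩
  inv_mem' := by
    rintro a ⟨k, hk⟩
    exact ⟨k, fun σ => by rw [map_inv₀, hk]⟩

variable {F A}

lemma mem_twoPowerField {z : A} :
    z ∈ twoPowerField F A ↔ ∃ k : ℕ, ∀ σ : Gal(A/F), (σ ^ 2 ^ k) z = z := Iff.rfl

lemma mem_twoPowerField_of_sq {z : A} (hz : z ^ 2 ∈ twoPowerField F A) :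
    z ∈ twoPowerField F A := by
  obtain ⟨k, hk⟩ := hz
  refine ⟨k + 1, fun σ => ?_⟩
  rw [pow_succ, pow_mul, sq, AlgEquiv.mul_apply]
  have h := hk σ
  rw [map_pow, sq_eq_sq_iff_eq_or_eq_neg] at h
  rcases h with h | h
  · rw [h, h]
  · rw [h, map_neg, h, neg_neg]

lemma twoPowerField_stable {z : A} (hz : z ∈ twoPowerField F A) (τ : Gal(A/F)) :
    τ z ∈ twoPowerField F A := by
  obtain ⟨k, hk⟩ := hz
  refine ⟨k, fun σ => ?_⟩
  -- `τ⁻¹ σ ^ m τ = (τ⁻¹ σ τ) ^ m` reduces the claim to `z` itself.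
  have h := congrArg τ (hk (τ⁻¹ * σ * τ))
  have h2 : τ * (τ⁻¹ * σ * τ) ^ 2 ^ k = σ ^ 2 ^ k * τ := by
    have := conj_pow (i := 2 ^ k) (a := τ⁻¹) (b := σ)
    rw [inv_inv] at this
    rw [this]
    group
  rwa [← AlgEquiv.mul_apply, h2] at h

/-- Let `P` be a Galois-stable subfield and `M` a subfield containing the base field and every
`y ∈ P` whose square is in `M`. Then `M` contains every element of `P` that lies in a Galois
2-extension of the base field. -/
lemma mem_of_mem_twoPowerField [CharZero F] [Normal F A] (P : IntermediateField F A)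
    (hP : ∀ σ : Gal(A/F), ∀ x ∈ P, σ x ∈ P) (M : Subfield A)
    (hbot : ∀ q : F, algebraMap F A q ∈ M) (hsq : ∀ y ∈ P, y ^ 2 ∈ M → y ∈ M) {a : A}
    (haP : a ∈ P) (ha : a ∈ twoPowerField F A) : a ∈ M := by
  have hT : Normal F ↥(P ⊓ twoPowerField F A) := by
    rw [IntermediateField.normal_iff_forall_map_le']
    rintro σ _ ⟨x, ⟨hxP, hx⟩, rfl⟩
    exact ⟨hP σ x hxP, twoPowerField_stable hx σ⟩
  let B : IntermediateField F A := IntermediateField.adjoin F {a}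
  let E := IntermediateField.normalClosure F B A
  have hET : E ≤ P ⊓ twoPowerField F A := by
    rw [IntermediateField.normalClosure_le_iff_of_normal, IntermediateField.adjoin_simple_le_iff]
    exact ⟨haP, ha⟩
  have hint : IsIntegral F a := Normal.isIntegral inferInstance a
  have : FiniteDimensional F B := IntermediateField.adjoin.finiteDimensional hint
  have : FiniteDimensional F E := normalClosure.is_finiteDimensional F B A
  have : IsGalois F E := ⟨⟩
  have haE : a ∈ E :=
    IntermediateField.le_normalClosure _ (IntermediateField.mem_adjoin_simple_self F a)
  have hG : IsPGroup 2 Gal(E/F) := by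
    intro τ
    obtain ⟨b, hb⟩ := Field.exists_primitive_element F E
    obtain ⟨k, hk⟩ := (hET b.2).2
    refine ⟨k, ?_⟩
    have hpow : ∀ (m : ℕ) (y : E), ((τ.liftNormal A) ^ m) (y : A) = ((τ ^ m) y : E) := by
      intro m
      induction m with
      | zero => intro y; rfl
      | succ m ih =>
        intro y
        rw [pow_succ, pow_succ, AlgEquiv.mul_apply, AlgEquiv.mul_apply, ← ih]
        congr 1
        exact τ.liftNormal_commutes A y
    have hfix : (τ ^ 2 ^ k) b = b := Subtype.ext ((hpow _ b).symm.trans (hk _))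
    have hhom : ((τ ^ 2 ^ k : Gal(E/F)) : E →ₐ[F] E) = AlgHom.id F E := by
      refine ((Field.primitive_element_iff_algHom_eq_of_eval F E (fun x => ?_) b _).1 hb _ ?_)
      · exact Normal.splits inferInstance x
      · exact hfix
    ext x
    exact congrArg Subtype.val (DFunLike.congr_fun hhom x)
  exact mem_of_isPGroup_two hG (M.comap (algebraMap E A)) (fun q => hbot q)
    (fun y hy => hsq _ (hET y.2).1 hy) ⟨a, haE⟩

end TwoPower

/-! ### Totally real numbers and automorphisms -/

section TotallyReal

variable {A : Type*} [Field A] [Algebra ℚ A] (ι : A →ₐ[ℚ] ℂ)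

/-- The elements of `A` all of whose Galois conjugates are real under the embedding `ι`. -/
def totallyRealField : IntermediateField ℚ A where
  carrier := {z | ∀ σ : Gal(A/ℚ), (ι (σ z)).im = 0}
  mul_mem' ha hb σ := by simp [ha σ, hb σ]
  add_mem' ha hb σ := by simp [ha σ, hb σ]
  algebraMap_mem' r σ := by simp
  inv_mem' a ha σ := by simp [ha σ]

variable {ι}

lemma mem_totallyRealField {a : A} :
    a ∈ totallyRealField ι ↔ ∀ σ : Gal(A/ℚ), (ι (σ a)).im = 0 := Iff.rfl

lemma totallyRealField_stable (τ : Gal(A/ℚ)) (a : A) (ha : a ∈ totallyRealField ι) :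
    τ a ∈ totallyRealField ι := fun σ => ha (σ * τ)

/-- The complex roots of the minimal polynomial of `ι a` are the `ι (σ a)`. -/
lemma exists_conj_of_root [Normal ℚ A] (hι : ∀ z : ℂ, IsAlgebraic ℚ z → ∃ a, ι a = z) {a : A}
    {z : ℂ} (hz : aeval z (minpoly ℚ (ι a)) = 0) : ∃ σ : Gal(A/ℚ), z = ι (σ a) := by
  have ha : IsIntegral ℚ a := Normal.isIntegral inferInstance a
  rw [minpoly.algHom_eq ι ι.injective] at hz
  obtain ⟨w, rfl⟩ := hι z ⟨_, minpoly.ne_zero ha, hz⟩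
  rw [aeval_algHom_apply, map_eq_zero] at hz
  obtain ⟨σ, hσ⟩ := minpoly.exists_algEquiv_of_root' ha.isAlgebraic hz
  exact ⟨σ, by rw [hσ]⟩

lemma isTotallyReal_iff [Normal ℚ A] (hι : ∀ z : ℂ, IsAlgebraic ℚ z → ∃ a, ι a = z) (z : ℂ) :
    IsTotallyReal z ↔ z ∈ (totallyRealField ι).toSubfield.map (ι : A →+* ℂ) := by
  constructor
  · rintro ⟨halg, hz⟩
    obtain ⟨a, rfl⟩ := hι z halg
    refine ⟨a, fun σ => hz _ ?_, rfl⟩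
    rw [minpoly.algHom_eq ι ι.injective, aeval_algHom_apply, aeval_algHom_apply, minpoly.aeval,
      map_zero, map_zero]
  · rintro ⟨a, ha, rfl⟩
    have hint : IsIntegral ℚ a := Normal.isIntegral inferInstance a
    refine ⟨(hint.map ι).isAlgebraic, fun z hz => ?_⟩
    obtain ⟨σ, rfl⟩ := exists_conj_of_root hι hz
    exact ha σ

lemma mem_twoPowerField_of_memFSqrt (hι : ∀ z : ℂ, IsAlgebraic ℚ z → ∃ a, ι a = z) {a : A}
    [Normal ℚ A] (h : MemFSqrt (ι a)) : a ∈ twoPowerField ℚ A := by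
  obtain ⟨b, hb, hab⟩ := h ((twoPowerField ℚ A).toSubfield.map (ι : A →+* ℂ)) (by
    rintro z ⟨b, hb, hbz⟩
    have hbz' : ι b = z ^ 2 := hbz
    have hint : IsIntegral ℚ b := Normal.isIntegral inferInstance b
    have hz : IsIntegral ℚ z := IsIntegral.of_pow two_pos (hbz' ▸ hint.map ι)
    obtain ⟨w, rfl⟩ := hι z hz.isAlgebraic
    rw [← map_pow] at hbz'
    refine ⟨w, mem_twoPowerField_of_sq ?_, rfl⟩
    rw [← ι.injective hbz']
    exact hb)
  rwa [← ι.injective hab]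

/-- A totally real number whose square is in `K` is in `K`: minus its square has only nonpositive
real conjugates, so its minimal polynomial has nonnegative coefficients. -/
lemma mem_of_sq_mem_of_totallyReal [Normal ℚ A]
    (hι : ∀ z : ℂ, IsAlgebraic ℚ z → ∃ a, ι a = z) {K : Subfield ℝ}
    (hK : ∀ x ∈ K, √(1 + x ^ 2) ∈ K) {y : A} (hy : y ∈ totallyRealField ι)
    (h : ι (y ^ 2) ∈ K.map Complex.ofRealHom) : ι y ∈ K.map Complex.ofRealHom := by
  obtain ⟨t, ht⟩ : ∃ t : ℝ, ι y = t := ⟨(ι y).re, Complex.ext rfl (by simpa using hy 1)⟩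
  have htK : t ^ 2 ∈ K := by
    obtain ⟨d, hd, hdy⟩ := h
    have h1 : ((d : ℝ) : ℂ) = ((t ^ 2 : ℝ) : ℂ) := by
      rw [map_pow, ht] at hdy
      simpa using hdy
    rwa [← Complex.ofReal_injective h1]
  refine ⟨t, ?_, ht.symm⟩
  rcases eq_or_ne t 0 with h0 | h0
  · rw [h0]
    exact K.zero_mem
  have hint : IsIntegral ℚ (-y ^ 2) := Normal.isIntegral inferInstance _
  have hy2 : ι (-y ^ 2) = ((-t ^ 2 : ℝ) : ℂ) := by
    rw [map_neg, map_pow, ht]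
    push_cast
    rfl
  have hroot : aeval (-t ^ 2) (minpoly ℚ (-y ^ 2)) = 0 := by
    have h1 : aeval (ι (-y ^ 2)) (minpoly ℚ (-y ^ 2)) = 0 := by
      rw [aeval_algHom_apply, minpoly.aeval, map_zero]
    rw [hy2] at h1
    have h2 := aeval_algebraMap_apply ℂ (-t ^ 2) (minpoly ℚ (-y ^ 2))
    rw [Complex.coe_algebraMap, h1] at h2
    exact_mod_cast h2.symm
  have hc := coeff_nonneg_of_roots_nonpos (minpoly.monic hint) fun z hz => by
    rw [← minpoly.algHom_eq ι ι.injective] at hz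
    obtain ⟨σ, rfl⟩ := exists_conj_of_root hι hz
    refine ⟨(ι (σ y)).re ^ 2, sq_nonneg _, ?_⟩
    have hre : ι (σ y) = ((ι (σ y)).re : ℂ) := Complex.ext rfl (by simpa using hy σ)
    rw [map_neg, map_neg, map_pow, map_pow, Complex.ofReal_pow, ← hre]
  have hs := sqrt_mem_of_coeff_nonneg hK htK (by positivity) (minpoly.ne_zero hint) hc hroot
  rw [Real.sqrt_sq_eq_abs] at hs
  rcases abs_choice t with h1 | h1 <;> rw [h1] at hs
  · exact hs
  · exact neg_mem_iff.1 hs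

lemma memFSqrtOneAddSq_iff_aux [Normal ℚ A] (hι : ∀ z : ℂ, IsAlgebraic ℚ z → ∃ a, ι a = z)
    (α : ℝ) : MemFSqrtOneAddSq α ↔ MemFSqrt (α : ℂ) ∧ IsTotallyReal (α : ℂ) := by
  constructor
  · intro h
    let C : Subfield ℂ := sInf {L | ∀ z : ℂ, z ^ 2 ∈ L → z ∈ L}
    have hC : ∀ z, z ∈ C ↔ MemFSqrt z := fun z => Subfield.mem_sInf
    let T := (totallyRealField ι).toSubfield.map (ι : A →+* ℂ)
    have hα : α ∈ (C ⊓ T).comap Complex.ofRealHom := by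
      refine h _ fun x hx => ?_
      obtain ⟨hxC, hxT⟩ : (x : ℂ) ∈ C ∧ (x : ℂ) ∈ T := hx
      have hsq : ((√(1 + x ^ 2) : ℝ) : ℂ) ^ 2 = 1 + (x : ℂ) ^ 2 := by
        rw [← Complex.ofReal_pow, Real.sq_sqrt (by positivity)]
        push_cast
        rfl
      refine ⟨?_, ?_⟩
      · refine (hC _).2 fun L hL => hL _ ?_
        change ((√(1 + x ^ 2) : ℝ) : ℂ) ^ 2 ∈ L
        rw [hsq]
        exact L.add_mem L.one_mem (L.pow_mem ((hC _).1 hxC L hL) 2)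
      · obtain ⟨a, ha, hax⟩ := hxT
        have hax' : ι a = x := hax
        have hint : IsIntegral ℚ a := Normal.isIntegral inferInstance a
        have hbint : IsIntegral ℚ ((√(1 + x ^ 2) : ℝ) : ℂ) := by
          refine IsIntegral.of_pow two_pos ?_
          rw [hsq, ← hax']
          exact isIntegral_one.add ((hint.map ι).pow 2)
        obtain ⟨b, hb⟩ := hι _ hbint.isAlgebraic
        refine ⟨b, fun σ => ?_, hb⟩
        have hba : b ^ 2 = 1 + a ^ 2 := ι.injective (by
          change ι (b ^ 2) = ι (1 + a ^ 2)
          rw [map_pow, map_add, map_pow, map_one, hb, hax', hsq])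
        have hσ : ι (σ b) ^ 2 = 1 + ι (σ a) ^ 2 := by
          rw [← map_pow, ← map_pow, hba]
          simp
        have hre : ι (σ a) = ((ι (σ a)).re : ℂ) := Complex.ext rfl (by simpa using ha σ)
        rw [hre] at hσ
        generalize ι (σ b) = w at hσ
        generalize (ι (σ a)).re = r at hσ
        -- A square root `w` of the positive real `1 + r ^ 2` cannot be purely imaginary.
        have h1 := congrArg Complex.re hσ
        have h2 := congrArg Complex.im hσ
        simp only [sq, Complex.mul_re, Complex.mul_im, Complex.add_re, Complex.add_im,
          Complex.one_re, Complex.one_im, Complex.ofReal_re, Complex.ofReal_im] at h1 h2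
        by_contra hw
        have hw0 : w.re = 0 := by
          have : w.re * w.im = 0 := by linarith
          exact (mul_eq_zero.1 this).resolve_right hw
        rw [hw0] at h1
        nlinarith [sq_nonneg r, sq_nonneg w.im]
    exact ⟨(hC _).1 hα.1, (isTotallyReal_iff hι _).2 hα.2⟩
  · rintro ⟨hs, ht⟩ K hK
    obtain ⟨a, ha, haα⟩ := (isTotallyReal_iff hι _).1 ht
    have haα' : ι a = α := haα
    have h2 : a ∈ twoPowerField ℚ A := mem_twoPowerField_of_memFSqrt hι (haα' ▸ hs)
    have hmem := mem_of_mem_twoPowerField (totallyRealField ι) totallyRealField_stable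
      ((K.map Complex.ofRealHom).comap (ι : A →+* ℂ))
      (fun q => by
        change ι (algebraMap ℚ A q) ∈ K.map Complex.ofRealHom
        rw [AlgHom.commutes, eq_ratCast]
        exact SubfieldClass.ratCast_mem _ q)
      (fun y hy h => mem_of_sq_mem_of_totallyReal hι hK hy h) ha h2
    obtain ⟨β, hβ, hβα⟩ : ι a ∈ K.map Complex.ofRealHom := hmem
    rw [haα'] at hβα
    rwa [← Complex.ofReal_injective hβα]

end TotallyReal

theorem memFSqrtOneAddSq_iff (α : ℝ) :
    MemFSqrtOneAddSq α ↔ MemFSqrt (α : ℂ) ∧ IsTotallyReal (α : ℂ) := by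
  -- The intermediate field's own `ℚ`-algebra structure is the one for which normality is known.
  let _ : Algebra ℚ (algebraicClosure ℚ ℂ) := (algebraicClosure ℚ ℂ).algebra'
  have : Normal ℚ (algebraicClosure ℚ ℂ) :=
    @IsAlgClosure.normal ℚ (algebraicClosure ℚ ℂ) _ _ _ (algebraicClosure.isAlgClosure ℚ ℂ)
  exact memFSqrtOneAddSq_iff_aux (ι := (algebraicClosure ℚ ℂ).val)
    (fun z hz => ⟨⟨z, mem_algebraicClosure_iff.2 hz⟩, rfl⟩) α
end
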